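/- Suppose p ≥ 3 and let n ≥ 1 be an integer such that 2n = p^e(q−1) for some integer e ≥ 0. Then ζ(n)² − 2ζ(n,n) = ζ(2n), and consequently there exists c ∈ k^× with ζ(n)² − 2ζ(n,n) = c·π̃^{2n}. -/

import Mathlib

/-!
Write `S_d(k) = ∑ 1/a^k` over monic `a ∈ 𝔽_q[θ]` of degree `d`. Splitting the pairs of monic
polynomials in `ζ(n)²` according to whether the first degree is larger than, smaller than or equal
to the second gives `ζ(n)² - 2ζ(n,n) = ∑_d S_d(n)²` (`hasSum_powS_sq`), while
`ζ(2n) = ∑_d S_d(2n)` (`hasSum_powS`).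

Carlitz's formula `S_d(k) = ℓ_d^{-k}` for `1 ≤ k ≤ q`, with `ℓ_d = ∏_{i=1}^d (θ - θ^{q^i})`
(`powS_eq`), together with `S_d(p^e k) = S_d(k)^{p^e}` yields `S_d(n)² = S_d(2n)` for
`n = p^e (q-1)/2`, hence the first claim. Carlitz's formula comes from the logarithmic derivative
of `∏ (X - a) = e_d - D_d`, where `e_d` is `𝔽_q`-linear, so that its derivative is constant and
`e_d` is linear modulo `X^q`.

For the second claim, `∑_{i ≤ d} ℓ_i^{-(q-1)} = [d+1] / ([1] ℓ_d^{q-1})` with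
`[i] = θ^{q^i} - θ` (`sum_ell`). Pulling the powers of `θ` out of the brackets turns the right side
into `θ^q/[1]` times a partial product of `∏ (1 - θ^{1-q^i})^{-(q-1)}`, up to a factor tending
to `1`. Thus `ζ(q-1) = -π̃^{q-1}/[1]`, and raising to the power `p^e` gives
`ζ(2n) = (-1/[1])^{p^e} π̃^{2n}`.
-/

/-!
Setting: `Fq` is a finite field with `q = Fintype.card Fq` elements and characteristic
`p = ringChar Fq`.  The field `k_∞ = 𝔽_q((1/θ))` is realized as `Kinf Fq`, the field of
formal Laurent series over `Fq` in the variable `u = θ⁻¹`; thus `theta Fq = u⁻¹` plays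
the role of `θ` (it is the single Hahn series supported in degree `-1`), and polynomials
in `θ` are evaluated in `Kinf Fq` via `Polynomial.aeval (theta Fq)`.  `KinfBar Fq` is a
fixed algebraic closure `k̄_∞` of `k_∞`.
-/

set_option synthInstance.maxHeartbeats 1000000
set_option maxHeartbeats 1000000

noncomputable section

variable (Fq : Type) [Field Fq] [Fintype Fq]

/-- `k_∞ = 𝔽_q((1/θ))`, with its `1/θ`-adic (valued) topology. -/
abbrev Kinf := LaurentSeries Fq

/-- `θ ∈ k_∞`, the inverse of the Laurent-series variable. -/
def theta : Kinf Fq := HahnSeries.single (-1 : ℤ) (1 : Fq)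

/-- The multizeta value `ζ(n 0, …, n (d-1))`: the sum, over all `d`-tuples of monic
polynomials `a i ∈ 𝔽_q[θ]` with `deg (a 0) > deg (a 1) > … > deg (a (d-1)) ≥ 0`, of
`1 / (a 0 ^ n 0 ⋯ a (d-1) ^ n (d-1))`, computed in `k_∞`. -/
def mzv (d : ℕ) (n : Fin d → ℕ) : Kinf Fq :=
  ∑' a : {a : Fin d → Polynomial Fq //
      (∀ i, (a i).Monic) ∧ ∀ i j : Fin d, i < j → (a j).degree < (a i).degree},
    (∏ i, Polynomial.aeval (theta Fq) (a.1 i) ^ n i)⁻¹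

/-- A fixed algebraic closure `k̄_∞` of `k_∞`. -/
abbrev KinfBar := AlgebraicClosure (Kinf Fq)

/-- The image of `θ` in `k̄_∞`. -/
def thetaBar : KinfBar Fq := algebraMap (Kinf Fq) (KinfBar Fq) (theta Fq)

/-- The fundamental period `π̃ = (−θ)^{q/(q−1)} ∏_{i≥1} (1−θ^{1−qⁱ})⁻¹` of the Carlitz
module, relative to a chosen `(q−1)`-st root `η` of `−θ` (so `(−θ)^{q/(q−1)} = η ^ q`);
the convergent product is computed in `k_∞` and mapped into `k̄_∞`. -/
def pitilde (η : KinfBar Fq) : KinfBar Fq :=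
  η ^ Fintype.card Fq *
    algebraMap (Kinf Fq) (KinfBar Fq)
      (∏' i : ℕ, (1 - theta Fq ^ ((1 : ℤ) - (Fintype.card Fq : ℤ) ^ (i + 1)))⁻¹)

/-- `k = 𝔽_q(θ)`, as a subfield of `k̄_∞`. -/
def kSub : Subfield (KinfBar Fq) :=
  Subfield.closure
    (Set.range (fun a : Fq => algebraMap (Kinf Fq) (KinfBar Fq) (algebraMap Fq (Kinf Fq) a)) ∪
      {thetaBar Fq})

/-- `k̄`, the algebraic closure of `k` inside `k̄_∞`. -/
def kbar : IntermediateField (kSub Fq) (KinfBar Fq) :=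
  algebraicClosure (kSub Fq) (KinfBar Fq)


section Algebra
open Polynomial

/-! ### Carlitz's polynomials `e_d` -/

variable (F : Type*) [Field F] [Fintype F] {K : Type*} [Field K] [Algebra F K] (θ : K)

/-- Carlitz's bracket `[i] = θ^{q^i} - θ`. -/
def br (i : ℕ) : K := θ ^ (Fintype.card F ^ i) - θ

/-- Carlitz's `D_d`, defined through `D_{d+1} = [d+1] D_d^q`; it is the product of all monic
polynomials of degree `d` evaluated at `θ`. -/
def carD : ℕ → K
  | 0 => 1
  | d + 1 => br F θ (d + 1) * carD d ^ Fintype.card F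

/-- The `𝔽_q`-linear polynomial `e_d = ∏_{deg a < d} (X - a(θ))`, defined through Carlitz's
recursion `e_{d+1} = e_d^q - D_d^{q-1} e_d`. -/
noncomputable def carE : ℕ → K[X]
  | 0 => X
  | d + 1 => carE d ^ Fintype.card F - C (carD F θ d ^ (Fintype.card F - 1)) * carE d

/-- `ℓ_d = ∏_{i=1}^d (θ - θ^{q^i})`. -/
def ell (d : ℕ) : K := ∏ i ∈ Finset.range d, (-br F θ (i + 1))

/-- The coefficient of `X` in `e_d`, which is also the (constant) derivative of `e_d`. -/
def carc : ℕ → K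
  | 0 => 1
  | d + 1 => - carD F θ d ^ (Fintype.card F - 1) * carc d

lemma sub_pow_q {R : Type*} [CommRing R] [Algebra F R] (x y : R) :
    (x - y) ^ Fintype.card F = x ^ Fintype.card F - y ^ Fintype.card F :=
  map_sub (FiniteField.frobeniusAlgHom F R) x y

lemma add_pow_q {R : Type*} [CommRing R] [Algebra F R] (x y : R) :
    (x + y) ^ Fintype.card F = x ^ Fintype.card F + y ^ Fintype.card F :=
  map_add (FiniteField.frobeniusAlgHom F R) x y

lemma smul_pow_q {R : Type*} [CommRing R] [Algebra F R] (c : F) (x : R) :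
    (c • x) ^ Fintype.card F = c • x ^ Fintype.card F :=
  map_smul (FiniteField.frobeniusAlgHom F R) c x

lemma br_succ (i : ℕ) : br F θ (i + 1) = br F θ i ^ Fintype.card F + br F θ 1 := by
  simp only [br, sub_pow_q, pow_succ, pow_mul, pow_zero, one_mul]
  ring

lemma eval_carE_add (d : ℕ) (x y : K) :
    (carE F θ d).eval (x + y) = (carE F θ d).eval x + (carE F θ d).eval y := by
  induction d with
  | zero => simp [carE]
  | succ d ih => simp only [carE, eval_sub, eval_mul, eval_pow, eval_C, ih, add_pow_q]; ring

lemma eval_carE_smul (d : ℕ) (c : F) (x : K) :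
    (carE F θ d).eval (c • x) = c • (carE F θ d).eval x := by
  induction d with
  | zero => simp [carE]
  | succ d ih =>
    simp only [carE, eval_sub, eval_mul, eval_pow, eval_C, ih, smul_pow_q, smul_sub,
      mul_smul_comm]

/-- `e_d` as an `𝔽_q`-linear endomorphism of `K`. -/
noncomputable def carL (d : ℕ) : K →ₗ[F] K where
  toFun x := (carE F θ d).eval x
  map_add' := eval_carE_add F θ d
  map_smul' := eval_carE_smul F θ d

/-- Carlitz's identity `e_{d+1}(θ z) = θ e_{d+1}(z) + [d+1] e_d(z)^q`. -/
lemma carE_theta_mul (d : ℕ) (z : K) :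
    (carE F θ (d + 1)).eval (θ * z) =
      θ * (carE F θ (d + 1)).eval z + br F θ (d + 1) * (carE F θ d).eval z ^ Fintype.card F := by
  have hq : 0 < Fintype.card F := Fintype.card_pos
  induction d with
  | zero =>
    simp [carE, carD, br]
    ring
  | succ d ih =>
    rw [carE]
    simp only [eval_sub, eval_mul, eval_pow, eval_C, ih, add_pow_q, mul_pow]
    have h1 : (carE F θ (d + 1)).eval z ^ Fintype.card F =
        ((carE F θ d).eval z ^ Fintype.card F) ^ Fintype.card F -
          (carD F θ d ^ Fintype.card F) ^ (Fintype.card F - 1) *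
            (carE F θ d).eval z ^ Fintype.card F := by
      simp only [carE, eval_sub, eval_mul, eval_pow, eval_C, sub_pow_q, mul_pow]
      ring
    have h2 : br F θ (d + 1) * carD F θ (d + 1) ^ (Fintype.card F - 1) =
        br F θ (d + 1) ^ Fintype.card F * (carD F θ d ^ Fintype.card F) ^ (Fintype.card F - 1) := by
      rw [carD, mul_pow, ← mul_assoc, ← pow_succ', Nat.sub_add_cancel hq]
    have h3 := br_succ F θ (d + 1)
    have h4 : θ ^ Fintype.card F = br F θ 1 + θ := by simp [br]
    rw [h3, h4]
    linear_combination (-br F θ (d+1) ^ Fintype.card F) * h1 -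
      (carE F θ d).eval z ^ Fintype.card F * h2

/-- Values of `e_d` on the basis `1, θ, …, θ^d` of polynomials of degree at most `d`. -/
lemma carE_theta_pow_self (d : ℕ) : (∀ i < d, (carE F θ d).eval (θ ^ i) = 0) ∧
    (carE F θ d).eval (θ ^ d) = carD F θ d := by
  have hq : 0 < Fintype.card F := Fintype.card_pos
  induction d with
  | zero => simp [carE, carD]
  | succ d ih =>
    have h0 : (carE F θ (d + 1)).eval (θ ^ d) = 0 := by
      simp only [carE, eval_sub, eval_mul, eval_pow, eval_C, ih.2]
      rw [← pow_succ, Nat.sub_add_cancel hq, sub_self]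
    refine ⟨fun i hi => ?_, ?_⟩
    · rcases Nat.lt_succ_iff_lt_or_eq.mp hi with h | rfl
      · simp [carE, ih.1 i h, hq.ne']
      · exact h0
    · rw [pow_succ', carE_theta_mul, h0, ih.2, carD]; ring

lemma eval_carE_aeval (d : ℕ) (a : F[X]) (ha : a.Monic) (hd : a.natDegree = d) :
    (carE F θ d).eval (aeval θ a) = carD F θ d := by
  change carL F θ d _ = _
  rw [aeval_eq_sum_range, map_sum, hd, Finset.sum_range_succ, Finset.sum_eq_zero]
  · rw [map_smul, ← hd, ha.coeff_natDegree, one_smul, zero_add, hd]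
    exact (carE_theta_pow_self F θ d).2
  · intro i hi
    rw [map_smul]
    change _ • (carE F θ d).eval _ = 0
    rw [(carE_theta_pow_self F θ d).1 i (Finset.mem_range.mp hi), smul_zero]

omit [Algebra F K] in
lemma carE_monic (d : ℕ) : (carE F θ d).Monic ∧ (carE F θ d).natDegree = Fintype.card F ^ d := by
  have hq : 1 < Fintype.card F := Fintype.one_lt_card
  induction d with
  | zero => simp [carE, monic_X]
  | succ d ih =>
    have hdeg : (C (carD F θ d ^ (Fintype.card F - 1)) * carE F θ d).natDegree
        < (carE F θ d ^ Fintype.card F).natDegree := by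
      refine lt_of_le_of_lt (natDegree_C_mul_le _ _) ?_
      rw [ih.1.natDegree_pow, ih.2]
      have : 0 < Fintype.card F ^ d := by positivity
      nlinarith
    refine ⟨(ih.1.pow _).sub_of_left (degree_lt_degree hdeg), ?_⟩
    rw [carE, natDegree_sub_eq_left_of_natDegree_lt hdeg, ih.1.natDegree_pow, ih.2, pow_succ']

omit [Algebra F K] in
lemma carE_eq (d : ℕ) : ∃ G : K[X], carE F θ d = C (carc F θ d) * X + X ^ Fintype.card F * G := by
  have hq : 0 < Fintype.card F := Fintype.card_pos
  induction d with
  | zero => exact ⟨0, by simp [carE, carc]⟩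
  | succ d ih =>
    obtain ⟨G, hG⟩ := ih
    obtain ⟨m, hm⟩ : X ∣ carE F θ d :=
      ⟨C (carc F θ d) + X ^ (Fintype.card F - 1) * G, by
        rw [hG, mul_add, ← mul_assoc X, ← pow_succ', Nat.sub_add_cancel hq]; ring⟩
    refine ⟨m ^ Fintype.card F - C (carD F θ d ^ (Fintype.card F - 1)) * G, ?_⟩
    rw [carE, carc]
    nth_rewrite 1 [hm]
    rw [hG]
    simp only [mul_pow, map_mul, map_neg]
    ring

lemma derivative_carE (d : ℕ) : derivative (carE F θ d) = C (carc F θ d) := by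
  induction d with
  | zero => simp [carE, carc]
  | succ d ih =>
    have h0 : ((Fintype.card F : ℕ) : K) = 0 := by
      rw [← map_natCast (algebraMap F K), FiniteField.cast_card_eq_zero, map_zero]
    rw [carE, carc, derivative_sub, derivative_pow, derivative_C_mul, ih]
    simp [h0]

omit [Algebra F K] in
lemma carc_mul_ell (d : ℕ) : carc F θ d * ell F θ d = carD F θ d := by
  have hq : 0 < Fintype.card F := Fintype.card_pos
  induction d with
  | zero => simp [carc, ell, carD]
  | succ d ih =>
    have h : carD F θ d ^ Fintype.card F = carD F θ d ^ (Fintype.card F - 1) * carD F θ d := by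
      rw [← pow_succ, Nat.sub_add_cancel hq]
    rw [carc, carD, h, ell, Finset.prod_range_succ, ← ell]
    linear_combination (carD F θ d ^ (Fintype.card F - 1) * br F θ (d + 1)) * ih

/-! ### Power sums over monic polynomials of fixed degree -/

instance finite_monic (d : ℕ) : Finite {p : F[X] // p.Monic ∧ p.natDegree = d} :=
  Finite.of_equiv _ ((monicEquivDegreeLT d).trans (degreeLTEquiv F d).toEquiv).symm

/-- The finite set of monic polynomials of degree `d` over `𝔽_q`. -/
noncomputable def mons (d : ℕ) : Finset F[X] :=
  Set.Finite.toFinset (s := {p : F[X] | p.Monic ∧ p.natDegree = d}) (finite_monic F d)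

lemma mem_mons {d : ℕ} {a : F[X]} : a ∈ mons F d ↔ a.Monic ∧ a.natDegree = d := by
  exact Set.Finite.mem_toFinset _

lemma card_mons (d : ℕ) : (mons F d).card = Fintype.card F ^ d := by
  have h : Nat.card {p : F[X] // p.Monic ∧ p.natDegree = d} = Fintype.card F ^ d := by
    rw [Nat.card_congr ((monicEquivDegreeLT d).trans (degreeLTEquiv F d).toEquiv)]
    simp
  rw [← h, ← Nat.subtype_card (mons F d) (fun x => mem_mons F)]

/-- The power sum `S_d(k) = ∑ 1/a^k` over monic `a` of degree `d`. -/
noncomputable def powS (d k : ℕ) : K := ∑ a ∈ mons F d, (aeval θ a ^ k)⁻¹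

/-- `S_d(p^e k) = S_d(k)^{p^e}`, by additivity of the Frobenius. -/
lemma powS_mul_pow (p e : ℕ) [hp : Fact p.Prime] [CharP K p] (d k : ℕ) :
    powS F θ d (p ^ e * k) = powS F θ d k ^ (p ^ e) := by
  rw [powS, powS, sum_pow_char_pow]
  refine Finset.sum_congr rfl fun a _ => ?_
  rw [inv_pow, ← pow_mul, mul_comm]

section Transcendental
variable (hθ : Function.Injective (aeval θ : F[X] → K))
include hθ

lemma br_ne_zero (i : ℕ) : br F θ (i + 1) ≠ 0 := by
  intro h
  have h1 : aeval θ (X ^ (Fintype.card F ^ (i + 1)) - X : F[X]) = aeval θ (0 : F[X]) := by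
    simpa [br] using h
  exact FiniteField.X_pow_card_pow_sub_X_ne_zero F i.succ_ne_zero Fintype.one_lt_card (hθ h1)

lemma ell_ne_zero (d : ℕ) : ell F θ d ≠ 0 :=
  Finset.prod_ne_zero_iff.mpr fun i _ => neg_ne_zero.mpr (br_ne_zero F θ hθ i)

lemma carD_ne_zero (d : ℕ) : carD F θ d ≠ 0 := by
  induction d with
  | zero => simp [carD]
  | succ d ih => exact mul_ne_zero (br_ne_zero F θ hθ d) (pow_ne_zero _ ih)

/-- `e_d - D_d = ∏ (X - a)` over monic `a` of degree `d`: both sides are monic of degree `q^d`,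
and the `q^d` values `a(θ)` are roots of the left side. -/
lemma carE_sub_carD (d : ℕ) :
    carE F θ d - C (carD F θ d) = ∏ a ∈ mons F d, (X - C (aeval θ a)) := by
  have hE := carE_monic F θ d
  have hpos : 0 < Fintype.card F ^ d := by positivity
  have hdegE : (carE F θ d).degree = (Fintype.card F ^ d : ℕ) := by
    rw [degree_eq_natDegree hE.1.ne_zero, hE.2]
  have hlt : (C (carD F θ d)).degree < (carE F θ d).degree := by
    rw [hdegE]
    exact lt_of_le_of_lt degree_C_le (by exact_mod_cast hpos)
  have hm : (carE F θ d - C (carD F θ d)).Monic := hE.1.sub_of_left hlt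
  have hdeg : (carE F θ d - C (carD F θ d)).degree = (Fintype.card F ^ d : ℕ) := by
    rw [degree_sub_eq_left_of_degree_lt hlt, hdegE]
  have hm' : (∏ a ∈ mons F d, (X - C (aeval θ a)) : K[X]).Monic :=
    monic_prod_of_monic _ _ fun a _ => monic_X_sub_C _
  have hdeg' : (∏ a ∈ mons F d, (X - C (aeval θ a)) : K[X]).degree = (Fintype.card F ^ d : ℕ) := by
    rw [degree_prod]; simp [card_mons]
  refine eq_of_degree_sub_lt_of_eval_index_eq (mons F d) (v := fun a => aeval θ a)
    hθ.injOn ?_ ?_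
  · rw [card_mons, ← hdeg]
    exact degree_sub_lt_left (hdeg.trans hdeg'.symm) hm.ne_zero (by rw [hm, hm'])
  · intro a ha
    have ha' := (mem_mons F).mp ha
    rw [eval_sub, eval_C, eval_carE_aeval F θ d a ha'.1 ha'.2, sub_self, eval_prod]
    exact (Finset.prod_eq_zero ha (by simp)).symm

/-- The generating series `∑_k S_d(k+1) X^k = ∑_a 1/(a - X)` equals `e_d' / (D_d - e_d)`: it is
minus the logarithmic derivative of `∏ (X - a)`. -/
lemma powS_series (d : ℕ) :
    PowerSeries.mk (fun k => powS F θ d (k + 1)) *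
      ((carE F θ d - C (carD F θ d) : K[X]) : PowerSeries K) =
      -((C (carc F θ d) : K[X]) : PowerSeries K) := by
  have h1 : PowerSeries.mk (fun k => powS F θ d (k + 1)) =
      ∑ a ∈ mons F d, PowerSeries.mk (fun k => (aeval θ a ^ (k + 1))⁻¹) := by
    ext k
    simp [powS]
  have h2 : ∀ a ∈ mons F d, PowerSeries.mk (fun k => (aeval θ a ^ (k + 1))⁻¹) *
      ((X - C (aeval θ a) : K[X]) : PowerSeries K) = -1 := by
    intro a ha
    have ha0 : aeval θ a ≠ 0 := by
      rw [← map_zero (aeval θ : F[X] →ₐ[F] K)]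
      exact hθ.ne ((mem_mons F).mp ha).1.ne_zero
    ext k
    rw [Polynomial.coe_sub, mul_sub, map_sub, Polynomial.coe_C, PowerSeries.coeff_mul_C,
      Polynomial.coe_X, PowerSeries.coeff_mk]
    rcases k with _ | k
    · simp [ha0]
    · rw [PowerSeries.coeff_succ_mul_X, PowerSeries.coeff_mk, map_neg, PowerSeries.coeff_one,
        if_neg k.succ_ne_zero, pow_succ _ (k + 1)]
      field_simp
      simp
  classical
  rw [← derivative_carE, h1, Finset.sum_mul]
  have h3 : derivative (carE F θ d) = derivative (carE F θ d - C (carD F θ d)) := by simp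
  rw [h3, carE_sub_carD F θ hθ, derivative_prod_finset, ← Polynomial.coeToPowerSeries.ringHom_apply,
    ← Polynomial.coeToPowerSeries.ringHom_apply, map_sum, ← Finset.sum_neg_distrib]
  refine Finset.sum_congr rfl fun a ha => ?_
  rw [← Finset.mul_prod_erase _ _ ha, map_mul, ← mul_assoc,
    Polynomial.coeToPowerSeries.ringHom_apply (φ := X - C (aeval θ a)), h2 a ha]
  simp

/-- Carlitz: `S_d(k) = 1/ℓ_d^k` for `1 ≤ k ≤ q` (here `k + 1` stands for `k`). Modulo `X^q` the
polynomial `e_d` is linear, so the generating series is geometric. -/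
lemma powS_eq (d k : ℕ) (hk : k < Fintype.card F) :
    powS F θ d (k + 1) = (ell F θ d ^ (k + 1))⁻¹ := by
  have hD := carD_ne_zero F θ hθ d
  have hl := ell_ne_zero F θ hθ d
  have hs := powS_series F θ hθ d
  obtain ⟨G, hG⟩ := carE_eq F θ d
  have hcl := carc_mul_ell F θ d
  have key : ∀ f : PowerSeries K, f * ((carE F θ d - C (carD F θ d) : K[X]) : PowerSeries K) =
      (f * PowerSeries.C (carc F θ d)) * PowerSeries.X +
        (f * (G : PowerSeries K)) * PowerSeries.X ^ Fintype.card F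
        - f * PowerSeries.C (carD F θ d) := by
    intro f
    rw [hG]
    simp only [Polynomial.coe_sub, Polynomial.coe_add, Polynomial.coe_mul, Polynomial.coe_C,
      Polynomial.coe_X, Polynomial.coe_pow]
    ring
  rw [key] at hs
  induction k with
  | zero =>
    have := congrArg (PowerSeries.coeff 0) hs
    rw [map_sub, map_add, PowerSeries.coeff_zero_mul_X, PowerSeries.coeff_mul_X_pow',
      if_neg (by omega), PowerSeries.coeff_mul_C, PowerSeries.coeff_mk] at this
    simp at this
    field_simp
    apply mul_right_cancel₀ hD
    linear_combination (ell F θ d) * this + hcl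
  | succ k ih =>
    have ih := ih (by omega)
    have := congrArg (PowerSeries.coeff (k + 1)) hs
    rw [map_sub, map_add, PowerSeries.coeff_succ_mul_X, PowerSeries.coeff_mul_X_pow',
      if_neg (by omega), PowerSeries.coeff_mul_C, PowerSeries.coeff_mk, PowerSeries.coeff_mul_C,
      PowerSeries.coeff_mk, ih] at this
    simp at this
    rw [pow_succ _ (k + 1), mul_inv]
    apply mul_right_cancel₀ hD
    rw [← hcl] at this ⊢
    field_simp at this ⊢
    linear_combination -this

/-- The partial sums `∑_{i ≤ d} 1/ℓ_i^{q-1} = [d+1]/([1] ℓ_d^{q-1})`; the induction step is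
`[d+2] = [d+1]^q + [1]`. -/
lemma sum_ell (hodd : Odd (Fintype.card F)) (d : ℕ) :
    ∑ i ∈ Finset.range (d + 1), (ell F θ i ^ (Fintype.card F - 1))⁻¹ =
      br F θ (d + 1) / (br F θ 1 * ell F θ d ^ (Fintype.card F - 1)) := by
  have hq : 0 < Fintype.card F := Fintype.card_pos
  have hev : Even (Fintype.card F - 1) := Nat.Odd.sub_odd hodd odd_one
  have h1 := br_ne_zero F θ hθ 0
  rw [zero_add] at h1
  induction d with
  | zero => simp [ell, h1]
  | succ d ih =>
    have hb := br_ne_zero F θ hθ d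
    have hl := ell_ne_zero F θ hθ d
    have hp : br F θ (d + 1) ^ Fintype.card F =
        br F θ (d + 1) ^ (Fintype.card F - 1) * br F θ (d + 1) := by
      rw [← pow_succ, Nat.sub_add_cancel hq]
    rw [Finset.sum_range_succ, ih, br_succ F θ (d + 1), hp, ell, ell, Finset.prod_range_succ, ← ell,
      mul_pow, hev.neg_pow]
    field_simp

end Transcendental

end Algebra

section Analysis
open Polynomial WithZero Filter Topology

/-! ### Summation in `k_∞` -/

/-- In a complete nonarchimedean ring, the square of `∑ f` minus twice its strictly
`deg`-decreasing part is the sum of the squares of the sums of `f` over the fibres of `deg`. -/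
lemma hasSum_sq_fiberwise {M L : Type*} [CommRing L] [UniformSpace L] [IsUniformAddGroup L]
    [NonarchimedeanRing L] [CompleteSpace L] [T2Space L] {f : M → L} (hf : Summable f)
    (deg : M → ℕ) {s : ℕ → L}
    (hs : ∀ d, HasSum (fun a : deg ⁻¹' {d} => f a) (s d)) :
    HasSum (fun d => s d ^ 2)
      ((∑' a, f a) ^ 2 - 2 * ∑' x : {x : M × M | deg x.2 < deg x.1}, f x.1.1 * f x.1.2) := by
  set g : M × M → L := fun x => f x.1 * f x.2 with hg
  have hgs : HasSum g ((∑' a, f a) ^ 2) := by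
    rw [sq]
    exact hf.hasSum.mul_of_nonarchimedean hf.hasSum
  set A : Set (M × M) := {x | deg x.2 < deg x.1} with hA
  set B : Set (M × M) := {x | deg x.1 < deg x.2} with hB
  set E : Set (M × M) := {x | deg x.1 = deg x.2} with hE
  set Z := ∑' x : A, f x.1.1 * f x.1.2 with hZ
  have hAs : HasSum (A.indicator g) Z := by
    rw [← hasSum_subtype_iff_indicator]
    exact (hgs.summable.subtype A).hasSum
  have hBs : HasSum (B.indicator g) Z := by
    rw [← (Equiv.prodComm _ _).hasSum_iff]
    convert hAs using 1
    ext1 x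
    simp only [Function.comp, Set.indicator, hA, hB, hg, Set.mem_ofPred_eq, Equiv.prodComm_apply,
      Prod.fst_swap, Prod.snd_swap]
    split_ifs
    · exact mul_comm _ _
    · rfl
  have hEs : HasSum (E.indicator g) ((∑' a, f a) ^ 2 - 2 * Z) := by
    have h := (hgs.sub hAs).sub hBs
    have hfun : E.indicator g = fun x => g x - A.indicator g x - B.indicator g x := by
      ext1 x
      simp only [Set.indicator, hA, hB, hE, Set.mem_ofPred_eq]
      rcases lt_trichotomy (deg x.1) (deg x.2) with h | h | h
      · simp [h, h.ne, h.le]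
      · simp [h]
      · simp [h, h.ne', h.le]
    rwa [hfun, two_mul, ← sub_sub]
  have hfib : HasSum (fun a => f a * s (deg a)) ((∑' a, f a) ^ 2 - 2 * Z) := by
    refine hEs.prod_fiberwise fun a => ?_
    have h1 := (hasSum_subtype_iff_indicator.mp (hs (deg a))).mul_left (f a)
    have hfun : (fun b => E.indicator g (a, b)) =
        fun b => f a * (deg ⁻¹' {deg a}).indicator f b := by
      ext1 b
      simp only [Set.indicator, hE, hg, Set.mem_ofPred_eq, Set.mem_preimage, Set.mem_singleton_iff,
        eq_comm (a := deg a), mul_ite, mul_zero]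
    rwa [hfun]
  have h2 := hfib.tsum_fiberwise deg
  have h3 (d : ℕ) : HasSum (fun a : deg ⁻¹' {d} => f a * s (deg a)) (s d * s d) := by
    have hfun : (fun a : deg ⁻¹' {d} => f a * s (deg a)) = fun a : deg ⁻¹' {d} => f a * s d := by
      ext1 a
      have had : deg a = d := a.2
      rw [had]
    rw [hfun]
    exact (hs d).mul_right (s d)
  simpa only [(h3 _).tsum_eq, ← sq] using h2

/-- The valuation topology on Laurent series is nonarchimedean. -/
instance nonarch_Kinf (F : Type*) [Field F] : NonarchimedeanRing (LaurentSeries F) where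
  is_nonarchimedean U hU := by
    obtain ⟨γ, hγ⟩ := Valued.mem_nhds_zero.mp hU
    exact ⟨⟨(Valued.v.restrict).ltAddSubgroup γ, Valued.isOpen_ball _ γ.1⟩, hγ⟩

omit [Fintype Fq] in
lemma v_theta : Valued.v (theta Fq) = exp (1 : ℤ) := by
  rw [theta, LaurentSeries.valuation_single_zpow, neg_neg]

/-- Constants have valuation `1`, being roots of unity. -/
instance v_trivialOn : (Valued.v : Valuation (Kinf Fq) ℤᵐ⁰).IsTrivialOn Fq where
  eq_one a ha := by
    have h : (Valued.v (algebraMap Fq (Kinf Fq) a)) ^ (Fintype.card Fq - 1) = (1 : ℤᵐ⁰) := by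
      rw [← map_pow, ← map_pow, FiniteField.pow_card_sub_one_eq_one a ha, map_one, map_one]
    have hq : Fintype.card Fq - 1 ≠ 0 := by
      have := Fintype.one_lt_card (α := Fq)
      omega
    exact (pow_eq_one_iff_of_nonneg zero_le hq).mp h

lemma v_aeval {a : Fq[X]} (ha : a ≠ 0) :
    Valued.v (aeval (theta Fq) a) = exp (a.natDegree : ℤ) := by
  rw [valuation_aeval_eq_valuation_X_pow_natDegree_of_one_lt_valuation_X _ _ ha, v_theta,
    ← exp_nsmul]
  · simp
  · rw [v_theta, ← exp_zero, exp_lt_exp]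
    norm_num

lemma aeval_theta_injective : Function.Injective (aeval (theta Fq) : Fq[X] → Kinf Fq) := by
  rw [injective_iff_map_eq_zero (aeval (theta Fq) : Fq[X] →ₐ[Fq] Kinf Fq)]
  intro a ha
  by_contra h
  have := v_aeval Fq h
  rw [ha, map_zero] at this
  exact exp_ne_zero this.symm

omit [Fintype Fq] in
/-- Convergence to `0` can be tested on the balls `v(x) < v(θ)^{-N}`. -/
lemma tendsto_zero_of_v {ι : Type*} {l : Filter ι} {f : ι → Kinf Fq}
    (h : ∀ N : ℕ, ∀ᶠ x in l, Valued.v (f x) < exp (-(N : ℤ))) : Tendsto f l (𝓝 0) := by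
  intro s hs
  obtain ⟨γ, hγ⟩ := Valued.mem_nhds_zero.mp hs
  set g : ℤᵐ⁰ := MonoidWithZeroHom.ValueGroup₀.embedding γ.1 with hg
  have hg0 : g ≠ 0 := by simp [hg]
  rw [Filter.mem_map]
  filter_upwards [h (log g).natAbs] with x hx
  apply hγ
  rw [Set.mem_ofPred_eq, Valuation.restrict_lt_iff_lt_embedding]
  refine hx.trans_le ?_
  rw [← hg, ← exp_log hg0, exp_le_exp, log_exp]
  omega

lemma finite_monic_le (N : ℕ) : {a : {a : Fq[X] // a.Monic} | a.1.natDegree ≤ N}.Finite := by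
  classical
  refine Set.Finite.of_finite_image (f := Subtype.val) ?_ Subtype.val_injective.injOn
  refine ((Finset.range (N + 1)).biUnion (mons Fq)).finite_toSet.subset ?_
  rintro _ ⟨a, ha, rfl⟩
  simpa [mem_mons, a.2] using Nat.lt_succ_of_le ha

/-- The general term `1/a^n` of `ζ(n)`, indexed by monic polynomials. -/
def zterm (n : ℕ) (a : {a : Fq[X] // a.Monic}) : Kinf Fq := (aeval (theta Fq) a.1 ^ n)⁻¹

lemma summable_zterm {n : ℕ} (hn : 1 ≤ n) : Summable (zterm Fq n) := by
  apply NonarchimedeanAddGroup.summable_of_tendsto_cofinite_zero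
  apply tendsto_zero_of_v
  intro N
  refine (finite_monic_le Fq N).subset ?_
  intro a ha
  by_contra h
  apply ha
  change Valued.v (zterm Fq n a) < exp (-(N : ℤ))
  simp only [Set.mem_ofPred_eq, not_le] at h
  rw [zterm, map_inv₀, map_pow, v_aeval Fq a.2.ne_zero, ← exp_nsmul, ← exp_neg, exp_lt_exp]
  simp
  nlinarith

omit [Fintype Fq] in
lemma mzv_one (n : ℕ) : mzv Fq 1 ![n] = ∑' a, zterm Fq n a := by
  let e : {a : Fin 1 → Fq[X] //
      (∀ i, (a i).Monic) ∧ ∀ i j : Fin 1, i < j → (a j).degree < (a i).degree} ≃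
      {a : Fq[X] // a.Monic} :=
    { toFun := fun a => ⟨a.1 0, a.2.1 0⟩
      invFun := fun a => ⟨fun _ => a.1, fun _ => a.2, fun i j h => by omega⟩
      left_inv := fun a => by
        ext i : 2
        have : i = 0 := Subsingleton.elim _ _
        subst this
        rfl
      right_inv := fun a => rfl }
  rw [mzv, ← e.tsum_eq]
  simp [zterm, e]

omit [Fintype Fq] in
lemma mzv_two (n : ℕ) : mzv Fq 2 ![n, n] =
    ∑' x : {x : {a : Fq[X] // a.Monic} × {a : Fq[X] // a.Monic} |
      x.2.1.natDegree < x.1.1.natDegree}, zterm Fq n x.1.1 * zterm Fq n x.1.2 := by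
  let e : {a : Fin 2 → Fq[X] //
      (∀ i, (a i).Monic) ∧ ∀ i j : Fin 2, i < j → (a j).degree < (a i).degree} ≃
      {x : {a : Fq[X] // a.Monic} × {a : Fq[X] // a.Monic} |
      x.2.1.natDegree < x.1.1.natDegree} :=
    { toFun := fun a => ⟨⟨⟨a.1 0, a.2.1 0⟩, ⟨a.1 1, a.2.1 1⟩⟩,
        natDegree_lt_natDegree (a.2.1 1).ne_zero (a.2.2 0 1 (by simp))⟩
      invFun := fun x => ⟨![x.1.1.1, x.1.2.1], by
        constructor
        · rw [Fin.forall_fin_two]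
          exact ⟨x.1.1.2, x.1.2.2⟩
        · intro i j hij
          have hi : i = 0 := by omega
          have hj : j = 1 := by omega
          subst hi hj
          exact degree_lt_degree x.2⟩
      left_inv := fun a => by
        ext i : 2
        fin_cases i <;> rfl
      right_inv := fun a => rfl }
  rw [mzv, ← e.tsum_eq]
  refine tsum_congr fun a => ?_
  simp only [zterm, e, Fin.prod_univ_two]
  rw [mul_inv]
  rfl

lemma sum_degree_eq (n d : ℕ) :
    HasSum (fun a : (fun a : {a : Fq[X] // a.Monic} => a.1.natDegree) ⁻¹' {d} => zterm Fq n a)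
      (powS Fq (theta Fq) d n) := by
  let e : (fun a : {a : Fq[X] // a.Monic} => a.1.natDegree) ⁻¹' {d} ≃ mons Fq d :=
    { toFun := fun a => ⟨a.1.1, (mem_mons Fq).mpr ⟨a.1.2, a.2⟩⟩
      invFun := fun a => ⟨⟨a.1, ((mem_mons Fq).mp a.2).1⟩, ((mem_mons Fq).mp a.2).2⟩
      left_inv := fun a => rfl
      right_inv := fun a => rfl }
  rw [← e.symm.hasSum_iff, powS, ← Finset.sum_coe_sort]
  exact hasSum_fintype _

/-- Grouping a convergent sum over monic polynomials by degree. -/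
lemma hasSum_powS {n : ℕ} (hn : 1 ≤ n) :
    HasSum (fun d => powS Fq (theta Fq) d n) (mzv Fq 1 ![n]) := by
  rw [mzv_one]
  have := (summable_zterm Fq hn).hasSum.tsum_fiberwise
    (fun a : {a : Fq[X] // a.Monic} => a.1.natDegree)
  simpa only [(sum_degree_eq Fq n _).tsum_eq] using this

/-- `ζ(n)² - 2ζ(n,n) = ∑_d S_d(n)²`. -/
lemma hasSum_powS_sq {n : ℕ} (hn : 1 ≤ n) :
    HasSum (fun d => powS Fq (theta Fq) d n ^ 2)
      (mzv Fq 1 ![n] ^ 2 - 2 * mzv Fq 2 ![n, n]) := by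
  rw [mzv_one, mzv_two]
  exact hasSum_sq_fiberwise (summable_zterm Fq hn) (fun a => a.1.natDegree) (sum_degree_eq Fq n)

/-! ### The Carlitz period and `ζ(p^e (q-1))` -/

omit [Fintype Fq] in
lemma v_theta_zpow (m : ℤ) : Valued.v (theta Fq ^ m) = exp m := by
  rw [map_zpow₀, v_theta, ← exp_zsmul]
  simp

lemma tendsto_theta_zpow :
    Tendsto (fun d : ℕ => theta Fq ^ ((1 : ℤ) - (Fintype.card Fq : ℤ) ^ (d + 1))) atTop (𝓝 0) := by
  apply tendsto_zero_of_v
  intro N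
  filter_upwards [eventually_ge_atTop N] with d hd
  rw [v_theta_zpow, exp_lt_exp]
  have h1 : d + 1 < Fintype.card Fq ^ (d + 1) := Nat.lt_pow_self Fintype.one_lt_card
  have h2 : ((d + 1 : ℕ) : ℤ) < ((Fintype.card Fq ^ (d + 1) : ℕ) : ℤ) := by exact_mod_cast h1
  push_cast at h2
  omega

/-- The `i`-th factor of the period product (counted from `0`) is invertible and is close to
`1`, within `v(θ)^{-i}`. -/
lemma v_period_factor (i : ℕ) :
    Valued.v ((1 - theta Fq ^ ((1 : ℤ) - (Fintype.card Fq : ℤ) ^ (i + 1)))⁻¹ - 1)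
      < exp (-(i : ℤ)) ∧ 1 - theta Fq ^ ((1 : ℤ) - (Fintype.card Fq : ℤ) ^ (i + 1)) ≠ 0 := by
  have h1 : i + 1 < Fintype.card Fq ^ (i + 1) := Nat.lt_pow_self Fintype.one_lt_card
  have h2 : ((i + 1 : ℕ) : ℤ) < ((Fintype.card Fq ^ (i + 1) : ℕ) : ℤ) := by exact_mod_cast h1
  push_cast at h2
  set x := theta Fq ^ ((1 : ℤ) - (Fintype.card Fq : ℤ) ^ (i + 1)) with hx
  have hvx : Valued.v x < exp (-(i : ℤ)) := by
    rw [hx, v_theta_zpow, exp_lt_exp]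
    omega
  have hvx1 : Valued.v x < 1 := hvx.trans_le (by rw [← exp_zero, exp_le_exp]; omega)
  have hv : Valued.v (1 - x) = 1 := Valuation.map_one_sub_of_lt _ hvx1
  have h0 : 1 - x ≠ 0 := by
    intro h
    rw [h, map_zero] at hv
    exact zero_ne_one hv
  refine ⟨?_, h0⟩
  have : (1 - x)⁻¹ - 1 = x * (1 - x)⁻¹ := by
    field_simp
    ring
  rw [this, map_mul, map_inv₀, hv, inv_one, mul_one]
  exact hvx

lemma multipliable_period :
    Multipliable fun i : ℕ => (1 - theta Fq ^ ((1 : ℤ) - (Fintype.card Fq : ℤ) ^ (i + 1)))⁻¹ := by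
  set f : ℕ → Kinf Fq := fun i => (1 - theta Fq ^ ((1 : ℤ) - (Fintype.card Fq : ℤ) ^ (i + 1)))⁻¹ - 1
    with hf
  have hfv : ∀ i, Valued.v (f i) < exp (-(i : ℤ)) := fun i => (v_period_factor Fq i).1
  have : Multipliable fun i => 1 + f i := by
    apply multipliable_one_add_of_summable_prod
    apply NonarchimedeanAddGroup.summable_of_tendsto_cofinite_zero
    apply tendsto_zero_of_v
    intro N
    refine (Finset.range N).powerset.finite_toSet.subset ?_
    intro t ht
    simp only [Finset.coe_powerset, Set.mem_preimage, Set.mem_powerset_iff, Finset.coe_subset]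
    intro i hi
    rw [Finset.mem_range]
    by_contra hiN
    apply ht
    change Valued.v (∏ j ∈ t, f j) < exp (-(N : ℤ))
    -- all factors have valuation at most `1`, and the `i`-th one with `i ≥ N` is small
    rw [map_prod, ← Finset.mul_prod_erase _ _ hi]
    have hle : ∏ j ∈ t.erase i, Valued.v (f j) ≤ 1 :=
      Finset.prod_le_one' fun j _ =>
        ((hfv j).trans_le (by rw [← exp_zero, exp_le_exp]; omega)).le
    refine (mul_le_of_le_one_right' hle).trans_lt ((hfv i).trans_le ?_)
    rw [exp_le_exp]
    omega
  simpa [hf] using this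

omit [Fintype Fq] in
lemma theta_ne_zero : theta Fq ≠ 0 := by
  intro h
  have := v_theta Fq
  rw [h, map_zero] at this
  exact exp_ne_zero this.symm

lemma br_eq (i : ℕ) : br Fq (theta Fq) (i + 1) = theta Fq ^ (Fintype.card Fq ^ (i + 1)) *
    (1 - theta Fq ^ ((1 : ℤ) - (Fintype.card Fq : ℤ) ^ (i + 1))) := by
  have h := theta_ne_zero Fq
  rw [br, mul_sub, mul_one]
  congr 1
  rw [← zpow_natCast, ← zpow_add₀ h]
  simp

/-- Partial sums of `∑_d 1/ℓ_d^{q-1}` in terms of partial products of the period. -/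
lemma sum_ell_eq (hodd : Odd (Fintype.card Fq)) (d : ℕ) :
    ∑ i ∈ Finset.range (d + 1), (ell Fq (theta Fq) i ^ (Fintype.card Fq - 1))⁻¹ =
      (theta Fq ^ Fintype.card Fq / br Fq (theta Fq) 1) *
        (1 - theta Fq ^ ((1 : ℤ) - (Fintype.card Fq : ℤ) ^ (d + 1))) *
        (∏ i ∈ Finset.range d,
          (1 - theta Fq ^ ((1 : ℤ) - (Fintype.card Fq : ℤ) ^ (i + 1)))⁻¹) ^
            (Fintype.card Fq - 1) := by
  have hinj := aeval_theta_injective Fq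
  have hθ := theta_ne_zero Fq
  have hq : 0 < Fintype.card Fq := Fintype.card_pos
  have hev : Even (Fintype.card Fq - 1) := Nat.Odd.sub_odd hodd odd_one
  rw [sum_ell Fq (theta Fq) hinj hodd, br_eq Fq d]
  -- `ℓ_d^{q-1} θ^q = θ^{q^{d+1}} ∏ (1 - θ^{1-q^i})^{q-1}`
  have key : ell Fq (theta Fq) d ^ (Fintype.card Fq - 1) * theta Fq ^ Fintype.card Fq =
      theta Fq ^ (Fintype.card Fq ^ (d + 1)) * (∏ i ∈ Finset.range d,
          (1 - theta Fq ^ ((1 : ℤ) - (Fintype.card Fq : ℤ) ^ (i + 1)))) ^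
            (Fintype.card Fq - 1) := by
    induction d with
    | zero => simp [ell]
    | succ d ih =>
      have hpow : theta Fq ^ (Fintype.card Fq ^ (d + 1 + 1)) =
          theta Fq ^ (Fintype.card Fq ^ (d + 1)) *
            (theta Fq ^ (Fintype.card Fq ^ (d + 1))) ^ (Fintype.card Fq - 1) := by
        rw [← pow_succ', Nat.sub_add_cancel hq, ← pow_mul, ← pow_succ]
      rw [ell, Finset.prod_range_succ, ← ell, mul_pow, hev.neg_pow, br_eq, mul_pow, hpow,
        Finset.prod_range_succ, mul_pow]
      linear_combination (theta Fq ^ (Fintype.card Fq ^ (d + 1))) ^ (Fintype.card Fq - 1) *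
        (1 - theta Fq ^ ((1 : ℤ) - (Fintype.card Fq : ℤ) ^ (d + 1))) ^ (Fintype.card Fq - 1) * ih
  have hP : (∏ i ∈ Finset.range d,
      (1 - theta Fq ^ ((1 : ℤ) - (Fintype.card Fq : ℤ) ^ (i + 1)))) ≠ 0 :=
    Finset.prod_ne_zero_iff.mpr fun i _ => (v_period_factor Fq i).2
  have h1 := br_ne_zero Fq (theta Fq) hinj 0
  rw [zero_add] at h1
  have hl := ell_ne_zero Fq (theta Fq) hinj d
  rw [Finset.prod_inv_distrib, inv_pow, ← div_eq_mul_inv,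
    div_eq_div_iff (by positivity) (pow_ne_zero _ hP), div_mul_eq_mul_div, div_mul_eq_mul_div,
    eq_div_iff h1]
  linear_combination (-(1 - theta Fq ^ ((1 : ℤ) - (Fintype.card Fq : ℤ) ^ (d + 1))) *
    br Fq (theta Fq) 1) * key

/-- `ζ(p^e (q-1)) = (θ^q/[1] · P^{q-1})^{p^e}`, where `P = ∏ (1 - θ^{1-q^i})⁻¹`. -/
lemma mzv_one_eq (p e : ℕ) [Fact p.Prime] [CharP (Kinf Fq) p] (hodd : Odd (Fintype.card Fq)) :
    mzv Fq 1 ![p ^ e * (Fintype.card Fq - 1)] =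
      (theta Fq ^ Fintype.card Fq / br Fq (theta Fq) 1 *
        (∏' i : ℕ, (1 - theta Fq ^ ((1 : ℤ) - (Fintype.card Fq : ℤ) ^ (i + 1)))⁻¹) ^
          (Fintype.card Fq - 1)) ^ (p ^ e) := by
  have hq : 1 < Fintype.card Fq := Fintype.one_lt_card
  have hinj := aeval_theta_injective Fq
  have hn : 1 ≤ p ^ e * (Fintype.card Fq - 1) :=
    Nat.mul_pos (pow_pos (Fact.out : p.Prime).pos e) (by omega)
  have h1 := ((hasSum_powS Fq hn).tendsto_sum_nat).comp (tendsto_add_atTop_nat 1)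
  have hlim : Tendsto (fun d => ((theta Fq ^ Fintype.card Fq / br Fq (theta Fq) 1) *
        (1 - theta Fq ^ ((1 : ℤ) - (Fintype.card Fq : ℤ) ^ (d + 1))) *
        (∏ i ∈ Finset.range d,
          (1 - theta Fq ^ ((1 : ℤ) - (Fintype.card Fq : ℤ) ^ (i + 1)))⁻¹) ^
            (Fintype.card Fq - 1)) ^ (p ^ e)) atTop
      (𝓝 ((theta Fq ^ Fintype.card Fq / br Fq (theta Fq) 1 * (1 - 0) *
        (∏' i : ℕ, (1 - theta Fq ^ ((1 : ℤ) - (Fintype.card Fq : ℤ) ^ (i + 1)))⁻¹) ^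
          (Fintype.card Fq - 1)) ^ (p ^ e))) :=
    (((tendsto_const_nhds.sub (tendsto_theta_zpow Fq)).const_mul _).mul
      ((multipliable_period Fq).hasProd.tendsto_prod_nat.pow _)).pow _
  rw [sub_zero, mul_one] at hlim
  refine tendsto_nhds_unique h1 (hlim.congr fun d => ?_)
  have hterm : ∀ i, powS Fq (theta Fq) i (p ^ e * (Fintype.card Fq - 1)) =
      ((ell Fq (theta Fq) i ^ (Fintype.card Fq - 1))⁻¹) ^ (p ^ e) := by
    intro i
    have := powS_eq Fq (theta Fq) hinj i (Fintype.card Fq - 2) (by omega)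
    rw [show Fintype.card Fq - 2 + 1 = Fintype.card Fq - 1 by omega] at this
    rw [powS_mul_pow, this]
  rw [← sum_ell_eq Fq hodd, sum_pow_char_pow]
  simp only [Function.comp, hterm]

/-- `S_d(n)² = S_d(2n)` for `n = p^e (q-1)/2`, since both sides are `ℓ_d^{-2n}`. -/
lemma powS_sq (p e m : ℕ) [Fact p.Prime] [CharP (Kinf Fq) p] (hm : 1 ≤ m)
    (hm2 : 2 * m = Fintype.card Fq - 1) (d : ℕ) :
    powS Fq (theta Fq) d (p ^ e * m) ^ 2 = powS Fq (theta Fq) d (p ^ e * (2 * m)) := by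
  have hinj := aeval_theta_injective Fq
  obtain ⟨k, rfl⟩ : ∃ k, m = k + 1 := ⟨m - 1, by omega⟩
  rw [powS_mul_pow, powS_mul_pow, powS_eq Fq (theta Fq) hinj d k (by omega),
    show 2 * (k + 1) = (2 * k + 1) + 1 by ring,
    powS_eq Fq (theta Fq) hinj d (2 * k + 1) (by omega),
    show (2 * k + 1) + 1 = (k + 1) * 2 by ring, pow_mul (ell Fq (theta Fq) d)]
  generalize ell Fq (theta Fq) d ^ (k + 1) = x
  rw [inv_pow, inv_pow, inv_pow, ← pow_mul, ← pow_mul, mul_comm]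

end Analysis

/-- If `p ≥ 3` and `2n = p^e(q−1)` for some `e ≥ 0`, then
`ζ(n)² − 2ζ(n,n) = ζ(2n)`, and consequently there is `c ∈ k^×` with
`ζ(n)² − 2ζ(n,n) = c·π̃^{2n}`. -/
theorem zeta_sq_sub_two_zetann_eq_zeta2n
    (hp : 3 ≤ ringChar Fq)
    (n : ℕ) (hn : 1 ≤ n) (he : ∃ e : ℕ, 2 * n = ringChar Fq ^ e * (Fintype.card Fq - 1))
    (η : KinfBar Fq) (hη : η ^ (Fintype.card Fq - 1) = -thetaBar Fq) :
    mzv Fq 1 ![n] ^ 2 - 2 * mzv Fq 2 ![n, n] = mzv Fq 1 ![2 * n] ∧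
    ∃ c ∈ kSub Fq, c ≠ 0 ∧
      algebraMap (Kinf Fq) (KinfBar Fq) (mzv Fq 1 ![n]) ^ 2 -
          2 * algebraMap (Kinf Fq) (KinfBar Fq) (mzv Fq 2 ![n, n]) =
        c * pitilde Fq η ^ (2 * n) := by
  obtain ⟨e, he⟩ := he
  set p := ringChar Fq with hpdef
  have : CharP Fq p := ringChar.charP Fq
  have : Fact p.Prime := ⟨CharP.char_is_prime Fq p⟩
  have : CharP (Kinf Fq) p := charP_of_injective_algebraMap (algebraMap Fq (Kinf Fq)).injective p
  have hq1 : 1 < Fintype.card Fq := Fintype.one_lt_card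
  have hpodd : Odd p := (Fact.out : p.Prime).odd_of_ne_two (by omega)
  have hodd : Odd (Fintype.card Fq) := by
    obtain ⟨f, _, hf⟩ := FiniteField.card Fq p
    rw [hf]
    exact hpodd.pow
  obtain ⟨m, hm⟩ : ∃ m, Fintype.card Fq - 1 = 2 * m :=
    (Nat.Odd.sub_odd hodd odd_one).two_dvd
  have hnm : n = p ^ e * m := by
    have : 2 * n = 2 * (p ^ e * m) := by rw [he, hm]; ring
    omega
  have hmain : mzv Fq 1 ![n] ^ 2 - 2 * mzv Fq 2 ![n, n] = mzv Fq 1 ![2 * n] := by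
    refine (hasSum_powS_sq Fq hn).unique ?_
    have h := hasSum_powS Fq (show 1 ≤ 2 * n by omega)
    have hterm : ∀ d, powS Fq (theta Fq) d n ^ 2 = powS Fq (theta Fq) d (2 * n) := by
      intro d
      rw [hnm, powS_sq Fq p e m (by omega) hm.symm]
      congr 1
      ring
    simpa only [hterm] using h
  refine ⟨hmain, ?_⟩
  have hb := br_ne_zero Fq (theta Fq) (aeval_theta_injective Fq) 0
  rw [zero_add] at hb
  have hθmem : thetaBar Fq ∈ kSub Fq := Subfield.subset_closure (Or.inr rfl)
  have hbmem : algebraMap (Kinf Fq) (KinfBar Fq) (br Fq (theta Fq) 1) ∈ kSub Fq := by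
    rw [br, map_sub, map_pow]
    exact sub_mem (pow_mem hθmem _) hθmem
  have hb0 : algebraMap (Kinf Fq) (KinfBar Fq) (br Fq (theta Fq) 1) ≠ 0 := by
    rwa [Ne, map_eq_zero_iff _ (algebraMap (Kinf Fq) (KinfBar Fq)).injective]
  -- `ζ(q-1) = -π̃^{q-1}/[1]`, raised to the power `p^e`
  refine ⟨(-(algebraMap (Kinf Fq) (KinfBar Fq) (br Fq (theta Fq) 1))⁻¹) ^ p ^ e,
    pow_mem (neg_mem (inv_mem hbmem)) _, pow_ne_zero _ (neg_ne_zero.mpr (inv_ne_zero hb0)), ?_⟩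
  have hmap := congrArg (algebraMap (Kinf Fq) (KinfBar Fq)) hmain
  rw [map_sub, map_pow, map_mul, map_ofNat] at hmap
  rw [hmap, he, mzv_one_eq Fq p e hodd, map_pow, map_mul, map_div₀, map_pow, map_pow, pitilde,
    mul_comm (p ^ e), pow_mul _ (Fintype.card Fq - 1), ← mul_pow]
  congr 1
  rw [mul_pow _ _ (Fintype.card Fq - 1), ← pow_mul, mul_comm (Fintype.card Fq), pow_mul, hη,
    hodd.neg_pow]
  change thetaBar Fq ^ _ / _ * _ = _
  field_simp
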